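/- Consider the real line with zero potential, V ≡ 0, and let k ≥ 3. Then Δ*_k(ℝ) = 0 = Σ_0, yet every k-partition P of ℝ satisfies Δ(P) > 0. In particular, for k ≥ 3 no spectral minimal k-partition of ℝ exists, i.e. the infimum Δ*_k(ℝ) is not attained. (This is the non-existence assertion of the paper's Example 1.5(1).) -/

import Mathlib

open MeasureTheory Set Filter Topology
open scoped ENNReal

/-- Rayleigh quotient of a test function `f` for the Schrödinger form with potential `V`. -/
noncomputable def rayleigh (V : ℝ → ℝ) (f : ℝ → ℝ) : ℝ :=
  (∫ x, ((deriv f x) ^ 2 + V x * (f x) ^ 2)) / (∫ x, (f x) ^ 2)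

/-- `f` is an admissible test function for the closed set `S`: continuously differentiable,
not identically zero, with compact support contained in `S`. -/
def TestFor (S : Set ℝ) (f : ℝ → ℝ) : Prop :=
  ContDiff ℝ 1 f ∧ f ≠ 0 ∧ HasCompactSupport f ∧ tsupport f ⊆ S

/-- Dirichlet ground state energy `λ_V(S)`, with `sInf ∅ = ∞`. -/
noncomputable def lambdaV (V : ℝ → ℝ) (S : Set ℝ) : ℝ≥0∞ :=
  sInf {e : ℝ≥0∞ | ∃ f : ℝ → ℝ, TestFor S f ∧ e = ENNReal.ofReal (rayleigh V f)}

/-- `Σ_V`, the infimum of the essential spectrum of `-d²/dx² + V` on `ℝ`, characterized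
Persson-style as `sup_{R>0} λ_V({|x| ≥ R})`. -/
noncomputable def SigmaV (V : ℝ → ℝ) : ℝ≥0∞ :=
  ⨆ R : ℝ, ⨆ _ : 0 < R, lambdaV V {x : ℝ | R ≤ |x|}

/-- A `k`-partition of `ℝ`: `k` closed connected subsets with nonempty interior whose
pairwise intersections are contained in both frontiers. -/
def IsPartitionR (k : ℕ) (G : Fin k → Set ℝ) : Prop :=
  (∀ i, IsClosed (G i)) ∧ (∀ i, IsConnected (G i)) ∧
    (∀ i, (interior (G i)).Nonempty) ∧
    ∀ i j, i ≠ j → G i ∩ G j ⊆ frontier (G i) ∩ frontier (G j)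

/-- The energy `Δ(P)` of a partition: the maximum of the ground state energies. -/
noncomputable def energyR (V : ℝ → ℝ) {k : ℕ} (G : Fin k → Set ℝ) : ℝ≥0∞ :=
  ⨆ i, lambdaV V (G i)

/-- The infimal `k`-partition energy `Δ*_k(ℝ)`. -/
noncomputable def optEnergyR (V : ℝ → ℝ) (k : ℕ) : ℝ≥0∞ :=
  ⨅ G : {G : Fin k → Set ℝ // IsPartitionR k G}, energyR V G.1

/-!
The ground state energy of an interval scales like the inverse square of its length, so cutting
out `k` adjacent intervals of a common large length makes all `k` energies small at once.
A bounded set, on the other hand, has positive energy: integrating `f ^ 2` by parts in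
`0 ≤ ∫ (f + 2 (x - a) f') ^ 2` gives `∫ f ^ 2 ≤ 4 ∫ ((x - a) f') ^ 2`, and the weight `x - a` is
bounded on the support of `f`. Some piece is always bounded when `k ≥ 3`, since an unbounded piece
fills a neighbourhood of one of the two ends of the line.
-/

theorem rayleigh_zero (f : ℝ → ℝ) :
    rayleigh (fun _ => 0) f = (∫ x, deriv f x ^ 2) / ∫ x, f x ^ 2 := by
  simp only [rayleigh, zero_mul, add_zero]

theorem lambdaV_anti (V : ℝ → ℝ) : Antitone (lambdaV V) := by
  refine fun S T hST => sInf_le_sInf ?_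
  rintro _ ⟨f, ⟨hf, hne, hc, hS⟩, rfl⟩
  exact ⟨f, ⟨hf, hne, hc, hS.trans hST⟩, rfl⟩

section Scaling

variable {c : ℝ} {S : Set ℝ} {f : ℝ → ℝ}

theorem rayleigh_zero_comp_affine (hc : c ≠ 0) (d : ℝ) (f : ℝ → ℝ) :
    rayleigh (fun _ => 0) (fun x => f (c * x + d)) = c ^ 2 * rayleigh (fun _ => 0) f := by
  have integral_comp (g : ℝ → ℝ) : ∫ x, g (c * x + d) = |c⁻¹| * ∫ x, g x := by
    rw [Measure.integral_comp_mul_left (fun y => g (y + d)), integral_add_right_eq_self,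
      smul_eq_mul]
  have deriv_comp (x : ℝ) : deriv (fun x => f (c * x + d)) x = c * deriv f (c * x + d) := by
    rw [deriv_comp_mul_left c (fun y => f (y + d)), deriv_comp_add_const, smul_eq_mul]
  simp only [rayleigh_zero, deriv_comp, mul_pow, integral_const_mul]
  rw [integral_comp (fun y => deriv f y ^ 2), integral_comp (fun y => f y ^ 2),
    mul_left_comm, mul_div_mul_left _ _ (abs_ne_zero.mpr (inv_ne_zero hc)), mul_div_assoc]

theorem TestFor.comp_affine (hf : TestFor S f) (hc : c ≠ 0) (d : ℝ) :
    TestFor ((fun x => c * x + d) ⁻¹' S) (fun x => f (c * x + d)) := by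
  obtain ⟨hsmooth, hne, hcompact, hsupp⟩ := hf
  let φ : ℝ ≃ₜ ℝ := affineHomeomorph c d hc
  refine ⟨hsmooth.comp (by fun_prop), fun h => hne ?_, hcompact.comp_homeomorph φ, ?_⟩
  · exact φ.surjective.injective_comp_right h
  · exact (tsupport_comp_eq_preimage f φ).trans_subset (preimage_mono hsupp)

theorem lambdaV_zero_preimage_affine_le (hc : c ≠ 0) (d : ℝ) (S : Set ℝ) :
    lambdaV (fun _ => 0) ((fun x => c * x + d) ⁻¹' S) ≤
      ENNReal.ofReal (c ^ 2) * lambdaV (fun _ => 0) S := by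
  have hc2 : ENNReal.ofReal (c ^ 2) ≠ 0 := by positivity
  rw [← ENNReal.div_le_iff' hc2 ENNReal.ofReal_ne_top]
  refine le_sInf ?_
  rintro _ ⟨f, hf, rfl⟩
  rw [ENNReal.div_le_iff' hc2 ENNReal.ofReal_ne_top, ← ENNReal.ofReal_mul (sq_nonneg c),
    ← rayleigh_zero_comp_affine hc d]
  exact sInf_le ⟨_, hf.comp_affine hc d, rfl⟩

theorem lambdaV_zero_preimage_affine (hc : c ≠ 0) (d : ℝ) (S : Set ℝ) :
    lambdaV (fun _ => 0) ((fun x => c * x + d) ⁻¹' S) =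
      ENNReal.ofReal (c ^ 2) * lambdaV (fun _ => 0) S := by
  refine (lambdaV_zero_preimage_affine_le hc d S).antisymm ?_
  have hS : (fun x => c⁻¹ * x + -d / c) ⁻¹' ((fun x => c * x + d) ⁻¹' S) = S := by
    ext x
    have : c * (c⁻¹ * x + -d / c) + d = x := by field_simp; ring
    simp only [mem_preimage, this]
  calc ENNReal.ofReal (c ^ 2) * lambdaV (fun _ => 0) S
      ≤ ENNReal.ofReal (c ^ 2) * (ENNReal.ofReal (c⁻¹ ^ 2) *
          lambdaV (fun _ => 0) ((fun x => c * x + d) ⁻¹' S)) := by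
        gcongr
        simpa only [hS] using lambdaV_zero_preimage_affine_le (inv_ne_zero hc) (-d / c)
          ((fun x => c * x + d) ⁻¹' S)
    _ = lambdaV (fun _ => 0) ((fun x => c * x + d) ⁻¹' S) := by
        rw [← mul_assoc, ← ENNReal.ofReal_mul (sq_nonneg c), ← mul_pow, mul_inv_cancel₀ hc,
          one_pow, ENNReal.ofReal_one, one_mul]

end Scaling

theorem lambdaV_ne_top_of_interior_nonempty (V : ℝ → ℝ) {S : Set ℝ} (hS : (interior S).Nonempty) :
    lambdaV V S ≠ ⊤ := by
  obtain ⟨c, hc⟩ := hS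
  obtain ⟨f, hsupp, hcompact, hsmooth, -, hfc⟩ :=
    exists_contDiff_tsupport_subset (n := 1) (mem_interior_iff_mem_nhds.mp hc)
  have hf : TestFor S f := ⟨hsmooth, fun h => by simp [h] at hfc, hcompact, hsupp⟩
  exact ne_top_of_le_ne_top ENNReal.ofReal_ne_top (sInf_le ⟨f, hf, rfl⟩)

theorem lambdaV_zero_Icc {a b : ℝ} (hab : a < b) :
    lambdaV (fun _ => 0) (Icc a b) =
      ENNReal.ofReal ((b - a)⁻¹ ^ 2) * lambdaV (fun _ => 0) (Icc 0 1) := by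
  have hba : 0 < b - a := sub_pos.mpr hab
  rw [← lambdaV_zero_preimage_affine (inv_ne_zero hba.ne') (-((b - a)⁻¹ * a))]
  congr 1
  ext x
  have : (b - a)⁻¹ * x + -((b - a)⁻¹ * a) = (x - a) / (b - a) := by ring
  simp only [mem_preimage, this, mem_Icc, le_div_iff₀ hba, div_le_iff₀ hba]
  constructor <;> rintro ⟨h₁, h₂⟩ <;> constructor <;> linarith

theorem tendsto_lambdaV_zero_Icc_atTop (a : ℝ) :
    Tendsto (fun b => lambdaV (fun _ => 0) (Icc a b)) atTop (𝓝 0) := by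
  have hunit : lambdaV (fun _ => 0) (Icc 0 1) ≠ ⊤ :=
    lambdaV_ne_top_of_interior_nonempty _ (by simp [interior_Icc])
  have hlength : Tendsto (fun b : ℝ => (b - a)⁻¹ ^ 2) atTop (𝓝 0) := by
    have hsub : Tendsto (fun b : ℝ => b - a) atTop atTop :=
      tendsto_atTop_add_const_right atTop (-a) tendsto_id
    have hinv : Tendsto (fun b => (b - a)⁻¹) atTop (𝓝 0) := tendsto_inv_atTop_zero.comp hsub
    simpa only [zero_pow two_ne_zero] using hinv.pow 2
  have hscaled := ENNReal.Tendsto.mul_const (ENNReal.tendsto_ofReal hlength) (Or.inr hunit)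
  rw [ENNReal.ofReal_zero, zero_mul] at hscaled
  refine hscaled.congr' ?_
  filter_upwards [eventually_gt_atTop a] with b hab using (lambdaV_zero_Icc hab).symm

theorem sigmaV_zero : SigmaV (fun _ => 0) = 0 := by
  simp only [SigmaV, ENNReal.iSup_eq_zero]
  intro R _
  refine le_bot_iff.mp (ge_of_tendsto' (tendsto_lambdaV_zero_Icc_atTop R) fun b => ?_)
  exact lambdaV_anti _ fun x hx => hx.1.trans (le_abs_self x)

theorem isPartitionR_Icc_succ {u : ℕ → ℝ} (hu : StrictMono u) (k : ℕ) :
    IsPartitionR k fun i => Icc (u i) (u (i + 1)) := by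
  have hlt (n : ℕ) : u n < u (n + 1) := hu n.lt_succ_self
  refine ⟨fun _ => isClosed_Icc, fun i => isConnected_Icc (hlt i).le, fun i => ?_, ?_⟩
  · simpa only [interior_Icc, nonempty_Ioo] using hlt i
  rintro i j hij x ⟨hi, hj⟩
  simp only [frontier_Icc (hlt _).le]
  rcases lt_or_gt_of_ne hij with h | h
  · have hle : u (i + 1) ≤ u j := hu.monotone (Nat.succ_le_of_lt h)
    exact ⟨Or.inr (hi.2.antisymm (hle.trans hj.1)), Or.inl ((hi.2.trans hle).antisymm hj.1)⟩
  · have hle : u (j + 1) ≤ u i := hu.monotone (Nat.succ_le_of_lt h)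
    exact ⟨Or.inl ((hj.2.trans hle).antisymm hi.1), Or.inr (hj.2.antisymm (hle.trans hi.1))⟩

theorem optEnergyR_zero (k : ℕ) : optEnergyR (fun _ => 0) k = 0 := by
  refine le_bot_iff.mp (ge_of_tendsto (tendsto_lambdaV_zero_Icc_atTop 0) ?_)
  filter_upwards [eventually_gt_atTop 0] with L hL
  have hu : StrictMono fun n : ℕ => n * L := fun m n hmn =>
    mul_lt_mul_of_pos_right (Nat.cast_lt.mpr hmn) hL
  refine (iInf_le _ ⟨_, isPartitionR_Icc_succ hu k⟩).trans (iSup_le fun i => ?_)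
  have hlength : ((i + 1 : ℕ) : ℝ) * L - i * L = L - 0 := by push_cast; ring
  rw [lambdaV_zero_Icc (hu (Nat.lt_succ_self i)), hlength, lambdaV_zero_Icc hL]

section Poincare

variable {f : ℝ → ℝ} {S : Set ℝ}

theorem integral_sq_eq_neg_two_mul_integral (hf : ContDiff ℝ 1 f) (hc : HasCompactSupport f)
    (a : ℝ) : ∫ x, f x ^ 2 = -2 * ∫ x, f x * ((x - a) * deriv f x) := by
  have : Continuous (deriv f) := hf.continuous_deriv le_rfl
  have hderiv (x : ℝ) : HasDerivAt (fun x => f x ^ 2) (2 * f x * deriv f x) x := by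
    simpa using (hf.differentiable one_ne_zero x).hasDerivAt.fun_pow 2
  have hint {g : ℝ → ℝ} (hg : Continuous g) (hsupp : ∀ x, f x = 0 → g x = 0) : Integrable g :=
    hg.integrable_of_hasCompactSupport (hc.mono fun x hx h => hx (hsupp x h))
  have hparts : ∫ x, f x ^ 2 * 1 = -∫ x, 2 * f x * deriv f x * (x - a) :=
    integral_mul_deriv_eq_deriv_mul_of_integrable
      (fun x _ => hderiv x) (fun x _ => (hasDerivAt_id x).sub_const a)
      (hint (by fun_prop) fun x hx => by simp [hx]) (hint (by fun_prop) fun x hx => by simp [hx])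
      (hint (by fun_prop) fun x hx => by simp [hx])
  simp only [mul_one] at hparts
  rw [hparts, neg_mul, ← integral_const_mul]
  congr 2 with x
  ring

theorem memLp_two_sub_mul_deriv (hf : ContDiff ℝ 1 f) (hc : HasCompactSupport f) (a : ℝ) :
    MemLp (fun x => (x - a) * deriv f x) 2 :=
  ((continuous_sub_right a).mul (hf.continuous_deriv le_rfl)).memLp_of_hasCompactSupport
    hc.deriv.mul_left

theorem integral_sq_le_four_mul_integral_sq (hf : ContDiff ℝ 1 f) (hc : HasCompactSupport f)
    (a : ℝ) : ∫ x, f x ^ 2 ≤ 4 * ∫ x, ((x - a) * deriv f x) ^ 2 := by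
  have hfL2 : MemLp f 2 := hf.continuous.memLp_of_hasCompactSupport hc
  have hgL2 := memLp_two_sub_mul_deriv hf hc a
  have hfg : Integrable fun x => f x * ((x - a) * deriv f x) := hfL2.integrable_mul hgL2
  have hexpand : ∫ x, (f x + 2 * ((x - a) * deriv f x)) ^ 2 =
      (∫ x, f x ^ 2) + 4 * (∫ x, f x * ((x - a) * deriv f x)) +
        4 * ∫ x, ((x - a) * deriv f x) ^ 2 := by
    have hsum : Integrable fun x => f x ^ 2 + 4 * (f x * ((x - a) * deriv f x)) :=
      hfL2.integrable_sq.add (hfg.const_mul 4)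
    rw [← integral_const_mul, ← integral_const_mul,
      ← integral_add hfL2.integrable_sq (hfg.const_mul 4),
      ← integral_add hsum (hgL2.integrable_sq.const_mul 4)]
    congr 1 with x
    ring
  have hnonneg : 0 ≤ ∫ x, (f x + 2 * ((x - a) * deriv f x)) ^ 2 :=
    integral_nonneg fun x => sq_nonneg _
  linarith [integral_sq_eq_neg_two_mul_integral hf hc a]

theorem poincare_inequality_of_tsupport_subset_closedBall (hf : ContDiff ℝ 1 f) {a r : ℝ}
    (hsupp : tsupport f ⊆ Metric.closedBall a r) :
    ∫ x, f x ^ 2 ≤ 4 * r ^ 2 * ∫ x, deriv f x ^ 2 := by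
  have hc : HasCompactSupport f :=
    (isCompact_closedBall a r).of_isClosed_subset (isClosed_tsupport f) hsupp
  have hderivL2 : MemLp (deriv f) 2 :=
    (hf.continuous_deriv le_rfl).memLp_of_hasCompactSupport hc.deriv
  have hweight (x : ℝ) : ((x - a) * deriv f x) ^ 2 ≤ r ^ 2 * deriv f x ^ 2 := by
    by_cases hx : deriv f x = 0
    · simp [hx]
    · have hxr : |x - a| ≤ r := hsupp (support_deriv_subset hx)
      rw [mul_pow, ← sq_abs (x - a)]
      gcongr
  calc ∫ x, f x ^ 2 ≤ 4 * ∫ x, ((x - a) * deriv f x) ^ 2 :=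
        integral_sq_le_four_mul_integral_sq hf hc a
    _ ≤ 4 * ∫ x, r ^ 2 * deriv f x ^ 2 := by
        gcongr
        · exact (memLp_two_sub_mul_deriv hf hc a).integrable_sq
        · exact hderivL2.integrable_sq.const_mul _
        · exact hweight
    _ = 4 * r ^ 2 * ∫ x, deriv f x ^ 2 := by rw [integral_const_mul, mul_assoc]

theorem TestFor.integral_sq_pos (hf : TestFor S f) : 0 < ∫ x, f x ^ 2 := by
  obtain ⟨hsmooth, hne, hcompact, -⟩ := hf
  obtain ⟨x, hx⟩ := Function.ne_iff.mp hne
  have hcont : Continuous fun x => f x ^ 2 := hsmooth.continuous.pow 2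
  have hcompact_sq : HasCompactSupport fun x => f x ^ 2 :=
    hcompact.comp_left (g := fun y : ℝ => y ^ 2) (zero_pow two_ne_zero)
  exact hcont.integral_pos_of_hasCompactSupport_nonneg_nonzero hcompact_sq
    (fun x => sq_nonneg (f x)) (pow_ne_zero 2 hx)

theorem lambdaV_zero_pos_of_isBounded (hS : Bornology.IsBounded S) :
    0 < lambdaV (fun _ => 0) S := by
  obtain ⟨r, hr, hSr⟩ := hS.subset_closedBall_lt 0 0
  have hbound : 0 < ENNReal.ofReal (4 * r ^ 2)⁻¹ := by positivity
  refine hbound.trans_le (le_sInf ?_)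
  rintro _ ⟨f, hf, rfl⟩
  refine ENNReal.ofReal_le_ofReal ?_
  rw [rayleigh_zero, le_div_iff₀ hf.integral_sq_pos, inv_mul_le_iff₀ (by positivity)]
  exact poincare_inequality_of_tsupport_subset_closedBall hf.1 (hf.2.2.2.trans hSr)

end Poincare

section UnboundedPieces

theorem interior_mem_atTop_of_not_bddAbove {α : Type*} [LinearOrder α] [TopologicalSpace α]
    [ClosedIicTopology α] [NoMaxOrder α] [Nonempty α] {s : Set α} (hs : s.OrdConnected)
    (hbdd : ¬BddAbove s) : interior s ∈ atTop := by
  obtain ⟨x, hx⟩ := nonempty_of_not_bddAbove hbdd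
  have hsub : Ioi x ⊆ s := fun y hy =>
    have ⟨z, hz, hyz⟩ := not_bddAbove_iff.mp hbdd y
    hs.out hx hz ⟨le_of_lt hy, hyz.le⟩
  exact mem_of_superset (Ioi_mem_atTop x) (interior_maximal hsub isOpen_Ioi)

theorem interior_mem_atBot_of_not_bddBelow {α : Type*} [LinearOrder α] [TopologicalSpace α]
    [ClosedIciTopology α] [NoMinOrder α] [Nonempty α] {s : Set α} (hs : s.OrdConnected)
    (hbdd : ¬BddBelow s) : interior s ∈ atBot :=
  interior_mem_atTop_of_not_bddAbove (α := αᵒᵈ) hs.dual hbdd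

variable {k : ℕ} {G : Fin k → Set ℝ}

theorem IsPartitionR.disjoint_interior (hG : IsPartitionR k G) {i j : Fin k} (hij : i ≠ j) :
    Disjoint (interior (G i)) (interior (G j)) :=
  disjoint_left.mpr fun _ hi hj =>
    (hG.2.2.2 i j hij ⟨interior_subset hi, interior_subset hj⟩).1.2 hi

theorem IsPartitionR.exists_isBounded (hG : IsPartitionR k G) (hk : 3 ≤ k) :
    ∃ i, Bornology.IsBounded (G i) := by
  by_contra! hunbdd
  have hend (i : Fin k) : ∃ b : Bool, interior (G i) ∈ bif b then atTop else atBot := by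
    have hconn : (G i).OrdConnected := (hG.2.1 i).isPreconnected.ordConnected
    by_cases hbelow : BddBelow (G i)
    · refine ⟨true, interior_mem_atTop_of_not_bddAbove hconn fun habove => hunbdd i ?_⟩
      exact isBounded_iff_bddBelow_bddAbove.mpr ⟨hbelow, habove⟩
    · exact ⟨false, interior_mem_atBot_of_not_bddBelow hconn hbelow⟩
  choose b hb using hend
  obtain ⟨i, j, hij, hbij⟩ := Fintype.exists_ne_map_eq_of_card_lt b <| by
    rwa [Fintype.card_bool, Fintype.card_fin]
  have hj := hb j
  rw [← hbij] at hj
  have : (bif b i then atTop else atBot : Filter ℝ).NeBot := by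
    cases b i
    · exact atBot_neBot
    · exact atTop_neBot
  obtain ⟨x, hxi, hxj⟩ := Filter.nonempty_of_mem (inter_mem (hb i) hj)
  exact disjoint_left.mp (hG.disjoint_interior hij) hxi hxj

theorem IsPartitionR.energyR_zero_pos (hG : IsPartitionR k G) (hk : 3 ≤ k) :
    0 < energyR (fun _ => 0) G := by
  obtain ⟨i, hi⟩ := hG.exists_isBounded hk
  exact (lambdaV_zero_pos_of_isBounded hi).trans_le (le_iSup (fun i => lambdaV _ (G i)) i)

end UnboundedPieces

/-- **Example 1.5(1), non-existence part.** For the free Laplacian (`V ≡ 0`) on `ℝ` and any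
`k ≥ 3`, one has `Δ*_k(ℝ) = 0 = Σ_0`, yet every `k`-partition has strictly positive energy;
hence no spectral minimal `k`-partition exists. -/
theorem free_line_no_minimal_partition (k : ℕ) (hk : 3 ≤ k) :
    optEnergyR (fun _ => 0) k = 0 ∧
    SigmaV (fun _ => 0) = 0 ∧
    ∀ G : Fin k → Set ℝ, IsPartitionR k G → 0 < energyR (fun _ => 0) G :=
  ⟨optEnergyR_zero k, sigmaV_zero, fun _ hG => hG.energyR_zero_pos hk⟩
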